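/- Let A be a unital C*-algebra whose spectrum is Hausdorff. Then the restriction map res : → Ẑ(A), sending the class of an irreducible representation λ to the class of λ restricted to the center Z(A) (a character of Z(A)), is injective, hence a homeomorphism from the compact space onto Ẑ(A). -/

import Mathlib

/-- An irreducible representation of the C*-algebra `A` on a complex Hilbert
space. -/
structure IrredRep (A : Type) [CStarAlgebra A] where
  /-- the underlying Hilbert space -/
  H : Type
  [normed : NormedAddCommGroup H]
  [ips : InnerProductSpace ℂ H]
  [complete : CompleteSpace H]
  [nontriv : Nontrivial H]
  /-- the representation map -/
  ρ : A →⋆ₐ[ℂ] (H →L[ℂ] H)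
  /-- irreducibility: the only closed invariant subspaces are `{0}` and `H` -/
  irred : ∀ S : Submodule ℂ H, IsClosed (S : Set H) →
    (∀ (a : A), ∀ x ∈ S, ρ a x ∈ S) → S = ⊥ ∨ S = ⊤

attribute [instance] IrredRep.normed IrredRep.ips IrredRep.complete IrredRep.nontriv

/-- Unitary equivalence of irreducible representations. -/
def UEquiv {A : Type} [CStarAlgebra A] (r₁ r₂ : IrredRep A) : Prop :=
  ∃ u : r₁.H ≃ₗᵢ[ℂ] r₂.H, ∀ (a : A) (x : r₁.H), r₂.ρ a (u x) = u (r₁.ρ a x)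

section Aux
open scoped ComplexOrder


section
variable {A : Type} [CStarAlgebra A]

lemma lcs : LocallyConvexSpace ℝ (WeakDual ℂ A) := by
  unfold WeakDual
  exact (topDualPairing ℂ A).weakBilin_withSeminorms.toLocallyConvexSpace

lemma ext_pt (L : Ideal A) (φ : A →L[ℂ] ℂ) (h1 : φ 1 = 1) (hn : ‖φ‖ ≤ 1) (hL : ∀ a ∈ L, φ a = 0) :
    ∃ ψ : A →L[ℂ] ℂ, ψ 1 = 1 ∧ ‖ψ‖ ≤ 1 ∧ (∀ a ∈ L, ψ a = 0) ∧
      ∀ ψ₁ ψ₂ : A →L[ℂ] ℂ, ψ₁ 1 = 1 → ‖ψ₁‖ ≤ 1 → (∀ a ∈ L, ψ₁ a = 0) →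
        ψ₂ 1 = 1 → ‖ψ₂‖ ≤ 1 → (∀ a ∈ L, ψ₂ a = 0) →
        ∀ s t : ℝ, 0 < s → 0 < t → s + t = 1 → (∀ a, ψ a = s * ψ₁ a + t * ψ₂ a) →
        ∀ a, ψ₁ a = ψ a := by
  let K : Set (WeakDual ℂ A) := {ψ | ψ ∈ WeakDual.toStrongDual ⁻¹' Metric.closedBall (0 : StrongDual ℂ A) 1 ∧ ψ 1 = 1 ∧ ∀ a ∈ L, ψ a = 0}
  have hK : IsCompact K := by
    refine (WeakDual.isCompact_closedBall (0 : StrongDual ℂ A) 1).inter_right ?_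
    refine IsClosed.inter (isClosed_eq (WeakDual.eval_continuous 1) continuous_const) ?_
    have : {ψ : WeakDual ℂ A | ∀ a ∈ L, ψ a = 0} = ⋂ a ∈ L, {ψ : WeakDual ℂ A | ψ a = 0} := by
      ext; simp
    have h2 : IsClosed (⋂ a ∈ L, {ψ : WeakDual ℂ A | ψ a = 0}) := isClosed_biInter fun a _ => isClosed_eq (WeakDual.eval_continuous a) continuous_const
    rw [← this] at h2; exact h2
  have hmem : ∀ ψ : StrongDual ℂ A, StrongDual.toWeakDual ψ ∈ K ↔ (‖ψ‖ ≤ 1 ∧ ψ 1 = 1 ∧ ∀ a ∈ L, ψ a = 0) := by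
    intro ψ
    simp only [K, Set.mem_ofPred_eq, Set.mem_preimage, mem_closedBall_zero_iff]
    rfl
  have := lcs (A := A)
  obtain ⟨ψ, hψ⟩ := hK.extremePoints_nonempty ⟨StrongDual.toWeakDual φ, (hmem φ).2 ⟨hn, h1, hL⟩⟩
  rw [mem_extremePoints] at hψ
  obtain ⟨hψK, hext⟩ := hψ
  have h := (hmem (WeakDual.toStrongDual ψ)).1 hψK
  refine ⟨WeakDual.toStrongDual ψ, h.2.1, h.1, h.2.2, ?_⟩
  intro ψ₁ ψ₂ a1 a2 a3 b1 b2 b3 s t hs ht hst hh a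
  have := (hext _ ((hmem ψ₁).2 ⟨a2, a1, a3⟩) _ ((hmem ψ₂).2 ⟨b2, b1, b3⟩)
    ⟨s, t, hs, ht, hst, ?_⟩).1
  · rw [← this]; rfl
  · refine DFunLike.ext _ _ fun a => ?_
    exact (hh a).symm

lemma state_im (φ : A →L[ℂ] ℂ) (h1 : φ 1 = 1) (hn : ‖φ‖ ≤ 1) (a : A) (ha : IsSelfAdjoint a) :
    (φ a).im = 0 := by
  have key : ∀ t : ℝ, ((φ a).im + t)^2 ≤ ‖a‖^2 + t^2 := by
    intro t
    have e1 : φ (a + ((t:ℂ) * Complex.I) • 1) = φ a + t * Complex.I := by simp [h1]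
    have e2 : ‖a + ((t:ℂ) * Complex.I) • (1:A)‖^2 ≤ ‖a‖^2 + t^2 := by
      rw [sq, ← CStarRing.norm_star_mul_self]
      have : star (a + ((t:ℂ) * Complex.I) • (1:A)) * (a + ((t:ℂ) * Complex.I) • (1:A)) =
        a * a + ((t:ℂ)^2) • (1:A) := by
        have e3 : ((t:ℂ) * Complex.I) * ((t:ℂ) * Complex.I) = - (t:ℂ)^2 := by
          ring_nf; simp
        have e6 : star ((t:ℂ) * Complex.I) = - ((t:ℂ) * Complex.I) := by simp
        rw [star_add, ha.star_eq, star_smul, star_one, e6]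
        generalize (t:ℂ) * Complex.I = c at e3
        have : (t:ℂ)^2 = - (c * c) := by rw [e3]; ring
        rw [this]
        simp only [neg_mul, add_mul, mul_add, smul_mul_assoc, mul_smul_comm, one_mul, mul_one, neg_smul, smul_add, smul_neg, smul_smul]
        abel
      rw [this]
      rcases subsingleton_or_nontrivial A with hA | hA
      · rw [Subsingleton.elim (a * a + ((t:ℂ)^2) • (1:A)) 0, norm_zero]; positivity
      refine (norm_add_le _ _).trans ?_
      rw [sq ‖a‖]
      gcongr
      · exact norm_mul_le _ _
      · simp [norm_smul]
    have e4 : ‖φ a + t * Complex.I‖ ≤ ‖a + ((t:ℂ) * Complex.I) • (1:A)‖ := by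
      rw [← e1]; exact (φ.le_of_opNorm_le hn _).trans (by rw [one_mul])
    have e5 : |(φ a).im + t| ≤ ‖φ a + t * Complex.I‖ := by
      simpa using Complex.abs_im_le_norm (φ a + t * Complex.I)
    calc _ = |(φ a).im + t|^2 := (sq_abs _).symm
      _ ≤ ‖a + ((t:ℂ) * Complex.I) • (1:A)‖^2 := by gcongr; exact e5.trans e4
      _ ≤ _ := e2
  by_contra h
  have := key ((‖a‖^2 + 1) / (2 * (φ a).im))
  have e : 2 * (φ a).im * ((‖a‖^2 + 1) / (2 * (φ a).im)) = ‖a‖^2+1 := by field_simp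
  nlinarith [sq_nonneg (φ a).im]

lemma state_pos [PartialOrder A] [StarOrderedRing A] (φ : A →L[ℂ] ℂ) (h1 : φ 1 = 1) (hn : ‖φ‖ ≤ 1) (a : A) (ha : 0 ≤ a) :
    0 ≤ φ a := by
  have him := state_im φ h1 hn a (IsSelfAdjoint.of_nonneg ha)
  rw [Complex.nonneg_iff]
  refine ⟨?_, him.symm⟩
  have hle : a ≤ algebraMap ℝ A ‖a‖ := IsSelfAdjoint.le_algebraMap_norm_self (IsSelfAdjoint.of_nonneg ha)
  have h2 : ‖algebraMap ℝ A ‖a‖ - a‖ ≤ ‖a‖ := by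
    rw [CStarAlgebra.norm_le_iff_le_algebraMap _ (norm_nonneg a) (sub_nonneg.2 hle)]
    simpa using ha
  have h3 : φ (algebraMap ℝ A ‖a‖ - a) = ‖a‖ - φ a := by
    rw [map_sub, Algebra.algebraMap_eq_smul_one, ← Complex.coe_smul, map_smul, h1]; simp
  have h4 : ‖(‖a‖ : ℂ) - φ a‖ ≤ ‖a‖ := by
    rw [← h3]; exact (φ.le_of_opNorm_le hn _).trans (by rw [one_mul]; exact h2)
  have h5 := (Complex.re_le_norm ((‖a‖ : ℂ) - φ a)).trans h4
  simp at h5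
  exact h5
end


section
open scoped InnerProductSpace
variable {A : Type} [CStarAlgebra A]

lemma vec_state {H : Type} [NormedAddCommGroup H] [InnerProductSpace ℂ H] [CompleteSpace H]
    (π : A →⋆ₐ[ℂ] (H →L[ℂ] H)) (η : H) (hη : ‖η‖ = 1) :
    ∃ ω : A →L[ℂ] ℂ, ω 1 = 1 ∧ ‖ω‖ ≤ 1 ∧ ∀ a, ω a = ⟪η, π a η⟫_ℂ := by
  let l : A →ₗ[ℂ] ℂ :=
    { toFun := fun a => ⟪η, π a η⟫_ℂ
      map_add' := by intro a b; simp [inner_add_right]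
      map_smul' := by intro c a; simp [inner_smul_right] }
  have hb : ∀ a, ‖l a‖ ≤ 1 * ‖a‖ := by
    intro a
    calc ‖⟪η, π a η⟫_ℂ‖ ≤ ‖η‖ * ‖π a η‖ := norm_inner_le_norm _ _
      _ ≤ ‖η‖ * (‖π a‖ * ‖η‖) := by gcongr; exact (π a).le_opNorm η
      _ = ‖π a‖ := by rw [hη]; ring
      _ ≤ 1 * ‖a‖ := by rw [one_mul]; exact NonUnitalStarAlgHom.norm_apply_le π a
  refine ⟨l.mkContinuous 1 hb, ?_, l.mkContinuous_norm_le zero_le_one hb, fun a => rfl⟩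
  change ⟪η, π 1 η⟫_ℂ = 1
  simp [hη]

lemma irred_of_ext (L : Ideal A) (ψ : A →L[ℂ] ℂ)
    (hL : ∀ a ∈ L, ψ a = 0)
    (hext : ∀ ψ₁ ψ₂ : A →L[ℂ] ℂ, ψ₁ 1 = 1 → ‖ψ₁‖ ≤ 1 → (∀ a ∈ L, ψ₁ a = 0) →
        ψ₂ 1 = 1 → ‖ψ₂‖ ≤ 1 → (∀ a ∈ L, ψ₂ a = 0) →
        ∀ s t : ℝ, 0 < s → 0 < t → s + t = 1 → (∀ a, ψ a = s * ψ₁ a + t * ψ₂ a) →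
        ∀ a, ψ₁ a = ψ a)
    {H : Type} [NormedAddCommGroup H] [InnerProductSpace ℂ H] [CompleteSpace H]
    (π : A →⋆ₐ[ℂ] (H →L[ℂ] H)) (ξ : H) (hξ : ‖ξ‖ = 1) (hd : DenseRange fun a => π a ξ)
    (hψ : ∀ a, ψ a = ⟪ξ, π a ξ⟫_ℂ) :
    (∀ a ∈ L, π a ξ = 0) ∧ ∀ S : Submodule ℂ H, IsClosed (S : Set H) →
    (∀ (a : A), ∀ x ∈ S, π a x ∈ S) → S = ⊥ ∨ S = ⊤ := by
  have hadj : ∀ a x y, ⟪π a x, y⟫_ℂ = ⟪x, π (star a) y⟫_ℂ := by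
    intro a x y
    rw [map_star, ContinuousLinearMap.star_eq_adjoint, ContinuousLinearMap.adjoint_inner_right]
  have hLξ : ∀ a ∈ L, π a ξ = 0 := by
    intro a ha
    have := hL (star a * a) (L.mul_mem_left _ ha)
    rw [hψ, map_mul, mul_apply_eq_comp, ← hadj] at this
    exact inner_self_eq_zero.1 this
  refine ⟨hLξ, fun S hS hinv => ?_⟩
  have hcl : ∀ T : Submodule ℂ H, IsClosed (T : Set H) → (∀ a, π a ξ ∈ T) → T = ⊤ := by
    intro T hT h
    rw [eq_top_iff]
    rintro x -
    have : closure (Set.range fun a => π a ξ) ⊆ T := closure_minimal (by rintro _ ⟨a, rfl⟩; exact h a) hT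
    exact this (hd x)
  have : CompleteSpace S := hS.completeSpace_coe
  have hperp : ∀ a, ∀ x ∈ Sᗮ, π a x ∈ Sᗮ := by
    intro a x hx y hy
    have := hx _ (hinv (star a) y hy)
    rwa [hadj, star_star] at this
  obtain ⟨p, hp, q, hq, hpq⟩ := S.exists_add_mem_mem_orthogonal ξ
  by_cases hq0 : q = 0
  · right
    refine hcl S hS fun a => ?_
    rw [hpq, hq0, add_zero]; exact hinv a p hp
  by_cases hp0 : p = 0
  · left
    have : Sᗮ = ⊤ := by
      refine hcl _ S.isClosed_orthogonal fun a => ?_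
      rw [hpq, hp0, zero_add]; exact hperp a q hq
    rwa [Submodule.orthogonal_eq_top_iff] at this
  exfalso
  have hnorm : ∀ v : H, v ≠ 0 → ‖((‖v‖⁻¹ : ℝ) : ℂ) • v‖ = 1 := by
    intro v hv
    have : ‖v‖ ≠ 0 := norm_ne_zero_iff.2 hv
    rw [norm_smul]; simp [this]
  obtain ⟨ω₁, a1, a2, a3⟩ := vec_state π _ (hnorm p hp0)
  obtain ⟨ω₂, b1, b2, b3⟩ := vec_state π _ (hnorm q hq0)
  have hval : ∀ v : H, v ≠ 0 → ∀ a, ⟪((‖v‖⁻¹ : ℝ) : ℂ) • v, π a (((‖v‖⁻¹ : ℝ) : ℂ) • v)⟫_ℂ =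
      ((‖v‖^2 : ℝ) : ℂ)⁻¹ * ⟪v, π a v⟫_ℂ := by
    intro v hv a
    rw [map_smul, inner_smul_left, inner_smul_right]
    simp; ring
  have hz : ∀ a ∈ L, π a p = 0 ∧ π a q = 0 := by
    intro a ha
    have h := hLξ a ha
    rw [hpq, map_add] at h
    have h1 : π a p = - π a q := eq_neg_of_add_eq_zero_left h
    have h2 : π a p ∈ Sᗮ := by rw [h1]; exact Sᗮ.neg_mem (hperp a q hq)
    have h3 : π a p = 0 := inner_self_eq_zero.1 (h2 _ (hinv a p hp))
    exact ⟨h3, by rw [h3, zero_add] at h; exact h⟩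
  have hp1 : 0 < ‖p‖ := norm_pos_iff.2 hp0
  have hq1 : 0 < ‖q‖ := norm_pos_iff.2 hq0
  have hc1 : ∀ a, ⟪p, π a q⟫_ℂ = 0 := fun a => hperp a q hq _ hp
  have hc2 : ∀ a, ⟪q, π a p⟫_ℂ = 0 := fun a => (S.mem_orthogonal' q).1 hq _ (hinv a p hp)
  have hsum : ‖p‖^2 + ‖q‖^2 = 1 := by
    have h := norm_add_sq_eq_norm_sq_add_norm_sq_of_inner_eq_zero p q (𝕜 := ℂ) (hq p hp)
    rw [← hpq, hξ] at h
    nlinarith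
  have key := hext ω₁ ω₂ a1 a2 (fun a ha => by rw [a3, map_smul, (hz a ha).1]; simp)
    b1 b2 (fun a ha => by rw [b3, map_smul, (hz a ha).2]; simp) (‖p‖^2) (‖q‖^2) (by positivity)
    (by positivity) hsum (by
      intro a
      have e1 : ((‖p‖^2 : ℝ) : ℂ) ≠ 0 := by exact_mod_cast (by positivity : ‖p‖^2 ≠ 0)
      have e2 : ((‖q‖^2 : ℝ) : ℂ) ≠ 0 := by exact_mod_cast (by positivity : ‖q‖^2 ≠ 0)
      rw [a3, b3, hval p hp0, hval q hq0, mul_inv_cancel_left₀ e1, mul_inv_cancel_left₀ e2, hψ,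
        hpq, map_add, inner_add_left, inner_add_right, inner_add_right, hc1, hc2]
      ring)
  have e1 : ((‖p‖^2 : ℝ) : ℂ) ≠ 0 := by exact_mod_cast (by positivity : ‖p‖^2 ≠ 0)
  have hort : ∀ a, ⟪p - ((‖p‖^2 : ℝ) : ℂ) • ξ, π a ξ⟫_ℂ = 0 := by
    intro a
    have h := key a
    rw [a3, hval p hp0, hψ, inv_mul_eq_iff_eq_mul₀ e1] at h
    rw [inner_sub_left, inner_smul_left, Complex.conj_ofReal, ← h]
    conv_lhs => rw [hpq, map_add, inner_add_right, hc1]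
    simp
  have h0 : p - ((‖p‖^2 : ℝ) : ℂ) • ξ = 0 := by
    have := hcl (ℂ ∙ (p - ((‖p‖^2 : ℝ) : ℂ) • ξ))ᗮ (Submodule.isClosed_orthogonal _) (fun a =>
      Submodule.mem_orthogonal_singleton_iff_inner_right.2 (hort a))
    rw [Submodule.orthogonal_eq_top_iff, Submodule.span_singleton_eq_bot] at this
    exact this
  have hξS : ξ ∈ S := by
    have : ξ = ((‖p‖^2 : ℝ) : ℂ)⁻¹ • p := by
      rw [eq_inv_smul_iff₀ e1]; exact (sub_eq_zero.1 h0).symm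
    rw [this]; exact S.smul_mem _ hp
  have hqS : q ∈ S := by
    have : q = ξ - p := by rw [hpq]; simp
    rw [this]; exact S.sub_mem hξS hp
  exact hq0 (inner_self_eq_zero.1 (hq _ hqS))

lemma exists_irrep (L : Ideal A) (φ : A →L[ℂ] ℂ) (h1 : φ 1 = 1) (hn : ‖φ‖ ≤ 1)
    (hL : ∀ a ∈ L, φ a = 0) :
    ∃ r : IrredRep A, ∃ ξ : r.H, ξ ≠ 0 ∧ ∀ a ∈ L, r.ρ a ξ = 0 := by
  letI : PartialOrder A := CStarAlgebra.spectralOrder A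
  haveI : StarOrderedRing A := CStarAlgebra.spectralOrderedRing A
  obtain ⟨ψ, p1, p2, p3, p4⟩ := ext_pt L φ h1 hn hL
  let f : A →ₚ[ℂ] ℂ := PositiveLinearMap.mk₀ ψ.toLinearMap (fun a ha => state_pos ψ p1 p2 a ha)
  let ξ : f.GNS := ((f.toPreGNS 1 : f.PreGNS) : f.GNS)
  have hact : ∀ a, f.gnsStarAlgHom a ξ = ((f.toPreGNS a : f.PreGNS) : f.GNS) := by
    intro a
    change f.gnsNonUnitalStarAlgHom a _ = _
    rw [PositiveLinearMap.gnsNonUnitalStarAlgHom_apply_coe]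
    simp
  have hψ : ∀ a, ψ a = ⟪ξ, f.gnsStarAlgHom a ξ⟫_ℂ := by
    intro a
    rw [hact, UniformSpace.Completion.inner_coe, PositiveLinearMap.preGNS_inner_def]
    simp; rfl
  have hξ : ‖ξ‖ = 1 := by
    have h := hψ 1
    rw [p1, map_one, ContinuousLinearMap.one_apply] at h
    have h2 : ‖ξ‖^2 = 1 := by rw [← inner_self_eq_norm_sq (𝕜 := ℂ) ξ, ← h]; simp
    nlinarith [norm_nonneg ξ]
  have hd : DenseRange fun a => f.gnsStarAlgHom a ξ := by
    simp_rw [hact]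
    exact UniformSpace.Completion.denseRange_coe.comp f.toPreGNS.surjective.denseRange
      (UniformSpace.Completion.continuous_coe _)
  have hξ0 : ξ ≠ 0 := by rw [← norm_ne_zero_iff, hξ]; exact one_ne_zero
  obtain ⟨q1, q2⟩ := irred_of_ext L ψ p3 p4 f.gnsStarAlgHom ξ hξ hd hψ
  haveI : Nontrivial f.GNS := ⟨ξ, 0, hξ0⟩
  exact ⟨{ H := f.GNS, ρ := f.gnsStarAlgHom, irred := q2 }, ξ, hξ0, q1⟩

end


section
open scoped InnerProductSpace
variable {A : Type} [CStarAlgebra A]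

lemma exists_irrep_of_ne_top (L : Ideal A) (hL : L ≠ ⊤) :
    ∃ r : IrredRep A, ∃ ξ : r.H, ξ ≠ 0 ∧ ∀ a ∈ L, r.ρ a ξ = 0 := by
  rcases subsingleton_or_nontrivial A with hA | hA
  · exact absurd (Subsingleton.elim _ _) hL
  let S : Submodule ℂ A := L.restrictScalars ℂ
  have h1 : ‖(Submodule.Quotient.mk (1 : A) : A ⧸ S)‖ = 1 := by
    apply le_antisymm
    · exact (Submodule.Quotient.norm_mk_le S 1).trans (by simp)
    · by_contra hlt
      push Not at hlt
      obtain ⟨m, hm, hm2⟩ := Submodule.Quotient.norm_mk_lt (Submodule.Quotient.mk (1 : A) : A ⧸ S)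
        (sub_pos.2 hlt)
      rw [add_sub_cancel] at hm2
      have h3 : 1 - m ∈ L := (Submodule.Quotient.eq S).1 hm.symm
      exact hL (L.eq_top_of_isUnit_mem h3 (Units.oneSub m hm2).isUnit)
  obtain ⟨g, hg, hg1⟩ := exists_dual_vector ℂ (Submodule.Quotient.mk (1 : A) : A ⧸ S)
    (by rw [h1]; exact one_ne_zero)
  rw [h1] at hg1
  let l : A →ₗ[ℂ] ℂ := g.toLinearMap ∘ₗ S.mkQ
  have hb : ∀ a, ‖l a‖ ≤ 1 * ‖a‖ := by
    intro a
    refine (g.le_of_opNorm_le hg.le _).trans ?_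
    gcongr
    exact Submodule.Quotient.norm_mk_le S a
  refine exists_irrep L (l.mkContinuous 1 hb) (by
    change g (Submodule.Quotient.mk 1) = 1
    simpa using hg1) (l.mkContinuous_norm_le zero_le_one hb) ?_
  intro a ha
  change g (Submodule.Quotient.mk a) = 0
  rw [(Submodule.Quotient.mk_eq_zero S).2 ha, map_zero]

lemma schur (r : IrredRep A) (z : A) (hz : z ∈ Subalgebra.center ℂ A) :
    ∃ c : ℂ, r.ρ z = c • (1 : r.H →L[ℂ] r.H) := by
  rw [Subalgebra.mem_center_iff] at hz
  have hc1 : ∀ a, Commute (r.ρ z) (r.ρ a) := fun a => by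
    rw [Commute, SemiconjBy, ← map_mul, ← map_mul, hz]
  have hc2 : ∀ a, Commute (star (r.ρ z)) (r.ρ a) := fun a => by
    have := (hc1 (star a)).star_star
    rwa [map_star, star_star] at this
  have hN : IsStarNormal (r.ρ z) := ⟨by rw [← map_star]; exact (hc1 _).symm⟩
  obtain ⟨c, hc⟩ := (spectrum.nonempty (r.ρ z) : (spectrum ℂ (r.ρ z)).Nonempty)
  refine ⟨c, ?_⟩
  rw [← Algebra.algebraMap_eq_smul_one]
  refine CFC.eq_algebraMap_of_spectrum_subset_singleton _ c ?_ hN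
  intro d hd
  rw [Set.mem_singleton_iff]
  by_contra hne
  have hpos : 0 < dist c d := dist_pos.2 (Ne.symm hne)
  let F : ℂ → ℂ → ℂ := fun e x => ((max 0 (dist c d / 2 - dist x e) : ℝ) : ℂ)
  have hF : ∀ e, Continuous (F e) := fun e => by fun_prop
  have hFe : ∀ e, F e e ≠ 0 := by
    intro e
    simp only [F, dist_self, sub_zero, ne_eq, Complex.ofReal_eq_zero]
    rw [max_eq_right (by positivity)]; positivity
  have hF0 : ∀ e ∈ spectrum ℂ (r.ρ z), cfc (F e) (r.ρ z) ≠ 0 := by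
    intro e he h0
    have h := cfc_map_spectrum (F e) (r.ρ z) hN (hF e).continuousOn
    rw [h0, spectrum.zero_eq] at h
    have : F e e ∈ F e '' spectrum ℂ (r.ρ z) := ⟨e, he, rfl⟩
    rw [← h] at this
    exact hFe e this
  have hmul : cfc (F c) (r.ρ z) * cfc (F d) (r.ρ z) = 0 := by
    rw [← cfc_mul (F c) (F d) (r.ρ z) (hF c).continuousOn (hF d).continuousOn]
    have : (fun x => F c x * F d x) = fun _ => 0 := by
      funext x
      simp only [F, mul_eq_zero, Complex.ofReal_eq_zero]
      have := dist_triangle_left c d x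
      by_cases h : dist x c < dist c d / 2
      · right; exact max_eq_left (by linarith)
      · left; exact max_eq_left (by linarith)
    rw [this]; exact cfc_const_zero _ _
  have hcomm : ∀ a, Commute (cfc (F c) (r.ρ z)) (r.ρ a) := fun a => (hc1 a).cfc (hc2 a) _
  have hinv : ∀ a : A, ∀ x ∈ LinearMap.ker (cfc (F c) (r.ρ z)).toLinearMap,
      r.ρ a x ∈ LinearMap.ker (cfc (F c) (r.ρ z)).toLinearMap := by
    intro a x hx
    rw [LinearMap.mem_ker] at hx ⊢
    have := congrArg (fun T : r.H →L[ℂ] r.H => T x) (hcomm a).eq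
    simp only [mul_apply_eq_comp] at this
    change cfc (F c) (r.ρ z) (r.ρ a x) = 0
    rw [this]
    change (cfc (F c) (r.ρ z)) x = 0 at hx
    rw [hx, map_zero]
  rcases r.irred (LinearMap.ker (cfc (F c) (r.ρ z)).toLinearMap) (cfc (F c) (r.ρ z)).isClosed_ker hinv with h | h
  · apply hF0 d hd
    ext x
    have : cfc (F d) (r.ρ z) x ∈ LinearMap.ker (cfc (F c) (r.ρ z)).toLinearMap := by
      rw [LinearMap.mem_ker]
      exact congrArg (fun T : r.H →L[ℂ] r.H => T x) hmul
    rw [h] at this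
    simpa using this
  · apply hF0 c hc
    ext x
    have : x ∈ LinearMap.ker (cfc (F c) (r.ρ z)).toLinearMap := by rw [h]; trivial
    simpa using this

lemma span_ne_top (b : A) (hb : IsSelfAdjoint b) (hu : ¬ IsUnit b) : Ideal.span {b} ≠ ⊤ := by
  intro h
  have : (1 : A) ∈ Ideal.span {b} := by rw [h]; trivial
  obtain ⟨c, hc⟩ := Ideal.mem_span_singleton'.1 this
  have h2 : b * star c = 1 := by
    have := congrArg star hc
    rwa [star_mul, hb.star_eq, star_one] at this
  exact hu (isUnit_iff_exists.2 ⟨c, by rw [left_inv_eq_right_inv hc h2]; exact h2, hc⟩)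

lemma exists_vec (b : A) (hb : IsSelfAdjoint b) (hu : ¬ IsUnit b) :
    ∃ r : IrredRep A, ∃ ξ : r.H, ξ ≠ 0 ∧ r.ρ b ξ = 0 := by
  obtain ⟨r, ξ, h, h2⟩ := exists_irrep_of_ne_top _ (span_ne_top b hb hu)
  exact ⟨r, ξ, h, h2 b (Ideal.mem_span_singleton_self b)⟩

lemma norm_le_of_irreps (a : A) (ha : IsSelfAdjoint a) (ε : ℝ) (hε : 0 ≤ ε)
    (h : ∀ r : IrredRep A, ‖r.ρ a‖ ≤ ε) : ‖a‖ ≤ ε := by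
  rcases subsingleton_or_nontrivial A with hA | hA
  · rw [Subsingleton.elim a 0, norm_zero]; exact hε
  have : ∃ s : ℝ, |s| = ‖a‖ ∧ s ∈ spectrum ℝ a := by
    rcases CStarAlgebra.norm_or_neg_norm_mem_spectrum ha with h | h
    · exact ⟨_, abs_norm a, h⟩
    · exact ⟨_, by rw [abs_neg, abs_norm], h⟩
  obtain ⟨s, hs, hsp⟩ := this
  have hsa : IsSelfAdjoint (algebraMap ℝ A s - a) := (IsSelfAdjoint.algebraMap A (by exact star_trivial s)).sub ha
  obtain ⟨r, ξ, h0, hξ⟩ := exists_vec _ hsa hsp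
  have e : r.ρ a ξ = (s : ℂ) • ξ := by
    rw [map_sub, Algebra.algebraMap_eq_smul_one, ← Complex.coe_smul, map_smul, map_one] at hξ
    exact (sub_eq_zero.1 hξ).symm
  have h2 := ((r.ρ a).le_opNorm ξ)
  rw [e, norm_smul] at h2
  simp only [Complex.norm_real, Real.norm_eq_abs, hs] at h2
  exact (le_of_mul_le_mul_right h2 (norm_pos_iff.2 h0)).trans (h r)

lemma eq_zero_of_irreps (a : A) (h : ∀ r : IrredRep A, r.ρ a = 0) : a = 0 := by
  have := norm_le_of_irreps (star a * a) (IsSelfAdjoint.star_mul_self a) 0 le_rfl (fun r => by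
    rw [map_mul, h r]; simp)
  rw [CStarRing.norm_star_mul_self] at this
  have h2 : ‖a‖ = 0 := by nlinarith [norm_nonneg a]
  exact norm_eq_zero.1 h2

lemma quad_bound {H : Type} [NormedAddCommGroup H] [InnerProductSpace ℂ H] [CompleteSpace H]
    {ι : Type*} [Fintype ι] (E : ι → H →L[ℂ] H) (hE : ∑ k, star (E k) * E k = 1) (μ : ι → ℝ)
    (ε : ℝ) (hε : 0 ≤ ε) (hμ : ∀ k, E k ≠ 0 → |μ k| ≤ ε) :
    ‖∑ k, ((μ k : ℝ) : ℂ) • (star (E k) * E k)‖ ≤ ε := by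
  have hadj : ∀ k x y, ⟪y, (star (E k) * E k) x⟫_ℂ = ⟪E k y, E k x⟫_ℂ := by
    intro k x y
    rw [mul_apply_eq_comp, ContinuousLinearMap.star_eq_adjoint, ContinuousLinearMap.adjoint_inner_right]
  have hsum : ∀ x : H, ∑ k, ‖E k x‖^2 = ‖x‖^2 := by
    intro x
    have h : ⟪x, (∑ k, star (E k) * E k) x⟫_ℂ = ⟪x, x⟫_ℂ := by rw [hE]; rfl
    rw [sum_apply, inner_sum] at h
    have h2 := congrArg RCLike.re h
    simp only [hadj, map_sum] at h2
    simpa only [inner_self_eq_norm_sq] using h2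
  refine ContinuousLinearMap.opNorm_le_bound _ hε fun x => ?_
  set y := (∑ k, ((μ k : ℝ) : ℂ) • (star (E k) * E k)) x with hy
  have h1 : ‖⟪y, y⟫_ℂ‖ ≤ ε * (‖y‖ * ‖x‖) := by
    have e : ⟪y, y⟫_ℂ = ∑ k, ((μ k : ℝ) : ℂ) * ⟪E k y, E k x⟫_ℂ := by
      have e0 : ⟪y, y⟫_ℂ = ⟪y, (∑ k, ((μ k : ℝ) : ℂ) • (star (E k) * E k)) x⟫_ℂ := rfl
      rw [e0, sum_apply, inner_sum]
      refine Finset.sum_congr rfl fun k _ => ?_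
      rw [smul_apply, inner_smul_right, hadj]
    rw [e]
    calc _ ≤ ∑ k, ε * (‖E k y‖ * ‖E k x‖) := by
          refine norm_sum_le_of_le _ fun k _ => ?_
          by_cases h0 : E k = 0
          · simp [h0]
          · rw [norm_mul, Complex.norm_real, Real.norm_eq_abs]
            exact mul_le_mul (hμ k h0) (norm_inner_le_norm _ _) (norm_nonneg _) hε
      _ = ε * ∑ k, ‖E k y‖ * ‖E k x‖ := by rw [Finset.mul_sum]
      _ ≤ _ := by
        gcongr
        refine abs_le_of_sq_le_sq' ?_ (by positivity) |>.2
        refine (Finset.sum_mul_sq_le_sq_mul_sq _ _ _).trans ?_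
        rw [hsum, hsum, mul_pow]
  have h2 : ‖⟪y, y⟫_ℂ‖ = ‖y‖ * ‖y‖ := by
    rw [inner_self_eq_norm_sq_to_K]; simp [sq]
  rw [h2] at h1
  rcases eq_or_ne ‖y‖ 0 with h0 | h0
  · rw [h0]; positivity
  · have : 0 < ‖y‖ := lt_of_le_of_ne (norm_nonneg _) (Ne.symm h0)
    nlinarith
end


section
open scoped InnerProductSpace
variable {A : Type} [CStarAlgebra A]

/-- The hull-kernel topology on the spectrum. -/
@[reducible] instance specTop (A : Type) [CStarAlgebra A] : TopologicalSpace (Quot (UEquiv (A := A))) :=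
  TopologicalSpace.generateFrom
      {U | ∃ J : Ideal A, U = {x : Quot (UEquiv (A := A)) | ∃ r : IrredRep A,
        Quot.mk _ r = x ∧ ¬ J ≤ RingHom.ker r.ρ.toRingHom}}

lemma ker_of_mk_eq (r₁ r₂ : IrredRep A) (h : Quot.mk UEquiv r₁ = Quot.mk UEquiv r₂) (a : A) :
    r₁.ρ a = 0 ↔ r₂.ρ a = 0 := by
  let g : Quot (UEquiv (A := A)) → Prop := Quot.lift (fun r => r.ρ a = 0) (by
    rintro r s ⟨u, hu⟩
    apply propext
    constructor
    · intro h
      ext y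
      have := hu a (u.symm y)
      rw [h] at this
      simpa using this
    · intro h
      ext x
      have := hu a x
      rw [h] at this
      simpa using this.symm)
  have := congrArg g h
  exact iff_of_eq this

lemma open_sep (U : Set (Quot (UEquiv (A := A)))) (hU : IsOpen U) (r : IrredRep A)
    (hr : Quot.mk _ r ∈ U) :
    ∃ c : A, r.ρ c ≠ 0 ∧ ∀ r' : IrredRep A, Quot.mk _ r' ∉ U → r'.ρ c = 0 := by
  induction hU with
  | basic s hs =>
    obtain ⟨J, rfl⟩ := hs
    obtain ⟨r₁, h1, h2⟩ := hr
    obtain ⟨c, hc, hc2⟩ := SetLike.not_le_iff_exists.1 h2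
    refine ⟨c, fun h => hc2 ((ker_of_mk_eq r₁ r h1 c).2 h), fun r' hr' => ?_⟩
    by_contra hne
    exact hr' ⟨r', rfl, fun hle => hne (hle hc)⟩
  | univ => exact ⟨1, by rw [map_one]; exact one_ne_zero, fun r' h => absurd trivial h⟩
  | inter s t _ _ ihs iht =>
    obtain ⟨c, hc, hc'⟩ := ihs hr.1
    obtain ⟨d, hd, hd'⟩ := iht hr.2
    have : ∃ a, r.ρ (c * a * d) ≠ 0 := by
      by_contra! hall
      let S : Submodule ℂ r.H := ⨅ a : A, LinearMap.ker (r.ρ c * r.ρ a).toLinearMap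
      have hmem : ∀ x, x ∈ S ↔ ∀ a, r.ρ c (r.ρ a x) = 0 := by
        intro x
        simp only [S, Submodule.mem_iInf, LinearMap.mem_ker]
        rfl
      have hcl : IsClosed (S : Set r.H) := by
        have : (S : Set r.H) = ⋂ a : A, {x | r.ρ c (r.ρ a x) = 0} := by
          ext x; simp [hmem]
        rw [this]
        exact isClosed_iInter fun a => isClosed_eq (by fun_prop) continuous_const
      rcases r.irred S hcl (by
        intro b x hx
        rw [hmem] at hx ⊢
        intro a
        have := hx (a * b)
        rwa [map_mul] at this) with h | h
      · apply hd
        ext x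
        have : r.ρ d x ∈ S := by
          rw [hmem]
          intro a
          have := congrArg (fun T : r.H →L[ℂ] r.H => T x) (hall a)
          simpa [map_mul] using this
        rw [h] at this
        simpa using this
      · apply hc
        ext x
        have : x ∈ S := by rw [h]; trivial
        rw [hmem] at this
        simpa using this 1
    obtain ⟨a, ha⟩ := this
    refine ⟨_, ha, fun r' hr' => ?_⟩
    by_cases h1 : Quot.mk _ r' ∈ s
    · have h2 : Quot.mk _ r' ∉ t := fun h2 => hr' ⟨h1, h2⟩
      rw [map_mul, hd' r' h2, mul_zero]
    · rw [map_mul, map_mul, hc' r' h1, zero_mul, zero_mul]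
  | sUnion S _ ih =>
    obtain ⟨s, hs, hrs⟩ := hr
    obtain ⟨c, hc, hc'⟩ := ih s hs hrs
    exact ⟨c, hc, fun r' h => hc' r' fun h2 => h ⟨s, hs, h2⟩⟩

/-- The ideal of a subset of the spectrum. -/
def idealOf (U : Set (Quot (UEquiv (A := A)))) : Ideal A where
  carrier := {c | ∀ r' : IrredRep A, Quot.mk _ r' ∉ U → r'.ρ c = 0}
  add_mem' := by
    intro a b ha hb r hr
    rw [map_add, ha r hr, hb r hr, add_zero]
  zero_mem' := fun r _ => map_zero _
  smul_mem' := by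
    intro c x hx r hr
    rw [smul_eq_mul, map_mul, hx r hr, mul_zero]

lemma iSup_idealOf {ι : Type*} (U : ι → Set (Quot (UEquiv (A := A))))
    (hU : ∀ i, IsOpen (U i)) (hc : ∀ x, ∃ i, x ∈ U i) : ⨆ i, idealOf (U i) = ⊤ := by
  by_contra h
  obtain ⟨r, ξ, h0, hk⟩ := exists_irrep_of_ne_top _ h
  obtain ⟨i, hi⟩ := hc (Quot.mk _ r)
  obtain ⟨c, hc1, hc2⟩ := open_sep _ (hU i) r hi
  let S : Submodule ℂ r.H := ⨅ a : A, LinearMap.ker (r.ρ c * r.ρ a).toLinearMap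
  have hmem : ∀ x, x ∈ S ↔ ∀ a, r.ρ c (r.ρ a x) = 0 := by
    intro x
    simp only [S, Submodule.mem_iInf, LinearMap.mem_ker]
    rfl
  have hcl : IsClosed (S : Set r.H) := by
    have : (S : Set r.H) = ⋂ a : A, {x | r.ρ c (r.ρ a x) = 0} := by
      ext x; simp [hmem]
    rw [this]
    exact isClosed_iInter fun a => isClosed_eq (by fun_prop) continuous_const
  have hξ : ξ ∈ S := by
    rw [hmem]
    intro a
    have h1 : c * a ∈ idealOf (U i) := fun r' hr' => by rw [map_mul, hc2 r' hr', zero_mul]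
    have h2 := hk _ (Submodule.mem_iSup_of_mem i h1)
    rwa [map_mul] at h2
  rcases r.irred S hcl (by
    intro b x hx
    rw [hmem] at hx ⊢
    intro a
    have := hx (a * b)
    rwa [map_mul] at this) with h | h
  · rw [h] at hξ; exact h0 (by simpa using hξ)
  · apply hc1
    ext x
    have : x ∈ S := by rw [h]; trivial
    rw [hmem] at this
    simpa using this 1

instance specCompact : CompactSpace (Quot (UEquiv (A := A))) := by
  refine ⟨isCompact_of_finite_subcover fun {ι} U hU hc => ?_⟩
  have h1 : (1 : A) ∈ ⨆ i, idealOf (U i) := by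
    rw [iSup_idealOf U hU (fun x => Set.mem_iUnion.1 (hc trivial))]; trivial
  rw [Submodule.mem_iSup_iff_exists_finset] at h1
  obtain ⟨t, ht⟩ := h1
  refine ⟨t, fun x _ => ?_⟩
  obtain ⟨r, rfl⟩ := Quot.exists_rep x
  by_contra hx
  simp only [Set.mem_iUnion, not_exists] at hx
  have hle : ⨆ i ∈ t, idealOf (U i) ≤ RingHom.ker r.ρ.toRingHom := by
    refine iSup₂_le fun i hi c hc => ?_
    exact hc r (hx i hi)
  have : r.ρ 1 = 0 := hle ht
  rw [map_one] at this
  exact one_ne_zero this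

lemma partition {ι : Type*} [Fintype ι] (U : ι → Set (Quot (UEquiv (A := A))))
    (hU : ∀ i, IsOpen (U i)) (hc : ∀ x, ∃ i, x ∈ U i) :
    ∃ e : ι → A, (∀ i, ∀ r' : IrredRep A, Quot.mk _ r' ∉ U i → r'.ρ (e i) = 0) ∧
      ∑ i, star (e i) * e i = 1 := by
  have h1 : (1 : A) ∈ ⨆ i, idealOf (U i) := by rw [iSup_idealOf U hU hc]; trivial
  rw [Submodule.mem_iSup_iff_exists_finsupp] at h1
  obtain ⟨f, hf, hf1⟩ := h1
  rw [Finsupp.sum_fintype _ _ (fun _ => rfl)] at hf1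
  let h := ∑ i, star (f i) * f i
  letI : PartialOrder A := CStarAlgebra.spectralOrder A
  haveI : StarOrderedRing A := CStarAlgebra.spectralOrderedRing A
  have hpos : 0 ≤ h := Finset.sum_nonneg fun i _ => star_mul_self_nonneg _
  have hunit : IsUnit h := by
    by_contra hu
    obtain ⟨r, ξ, h0, hξ⟩ := exists_vec h (IsSelfAdjoint.of_nonneg hpos) hu
    have hs : ∑ i, ‖r.ρ (f i) ξ‖^2 = 0 := by
      have h2 : ⟪ξ, r.ρ h ξ⟫_ℂ = 0 := by rw [hξ, inner_zero_right]
      simp only [h, map_sum, map_mul, map_star, sum_apply, inner_sum, mul_apply_eq_comp,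
        ContinuousLinearMap.star_eq_adjoint, ContinuousLinearMap.adjoint_inner_right] at h2
      have h3 := congrArg RCLike.re h2
      simp only [map_sum] at h3
      simpa only [inner_self_eq_norm_sq, map_zero] using h3
    rw [Finset.sum_eq_zero_iff_of_nonneg (fun i _ => by positivity)] at hs
    apply h0
    have : r.ρ 1 ξ = 0 := by
      rw [← hf1, map_sum, sum_apply]
      refine Finset.sum_eq_zero fun i hi => ?_
      simpa using hs i hi
    simpa using this
  let s := CFC.sqrt h
  have hss : s * s = h := CFC.sqrt_mul_sqrt_self h hpos
  have hsu : IsUnit s := by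
    rw [← isUnit_pow_iff two_ne_zero, sq, hss]; exact hunit
  obtain ⟨u, hu⟩ := hsu
  have hsa : star s = s := (IsSelfAdjoint.of_nonneg (CFC.sqrt_nonneg h)).star_eq
  have hw : star ((u⁻¹ : Aˣ) : A) = ((u⁻¹ : Aˣ) : A) := by
    have hu' : star u = u := Units.ext (by rw [Units.coe_star, hu, hsa])
    rw [← Units.coe_star, star_inv, hu']
  refine ⟨fun i => f i * ((u⁻¹ : Aˣ) : A), fun i r' hr' => ?_, ?_⟩
  · rw [map_mul, hf i r' hr', zero_mul]
  · have : ∀ i, star (f i * ((u⁻¹ : Aˣ) : A)) * (f i * ((u⁻¹ : Aˣ) : A)) =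
        ((u⁻¹ : Aˣ) : A) * (star (f i) * f i) * ((u⁻¹ : Aˣ) : A) := by
      intro i; rw [star_mul, hw]; simp only [mul_assoc]
    simp only [this]
    rw [← Finset.sum_mul, ← Finset.mul_sum]
    change _ * h * _ = 1
    rw [← hss, ← hu]
    simp


lemma rho_cont (r : IrredRep A) : Continuous r.ρ :=
  AddMonoidHomClass.continuous_of_bound r.ρ 1 (fun a => by
    rw [one_mul]; exact NonUnitalStarAlgHom.norm_apply_le r.ρ a)

lemma dauns_hofmann (f : C(Quot (UEquiv (A := A)), ℝ)) :
    ∃ z ∈ Subalgebra.center ℂ A, ∀ r : IrredRep A,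
      r.ρ z = ((f (Quot.mk _ r) : ℝ) : ℂ) • (1 : r.H →L[ℂ] r.H) := by
  have happ : ∀ ε : ℝ, 0 < ε → ∃ a : A, IsSelfAdjoint a ∧ ∀ r : IrredRep A,
      ‖r.ρ a - ((f (Quot.mk _ r) : ℝ) : ℂ) • (1 : r.H →L[ℂ] r.H)‖ ≤ ε := by
    intro ε hε
    let V : Quot (UEquiv (A := A)) → Set (Quot (UEquiv (A := A))) := fun x => f ⁻¹' Metric.ball (f x) ε
    have hV : ∀ x, IsOpen (V x) := fun x => Metric.isOpen_ball.preimage f.continuous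
    obtain ⟨t, ht⟩ := CompactSpace.elim_nhds_subcover V
      (fun x => (hV x).mem_nhds (Metric.mem_ball_self hε))
    obtain ⟨e, he, he1⟩ := partition (fun i : t => V i) (fun i => hV i) (by
      intro x
      have : x ∈ ⋃ x ∈ t, V x := by rw [ht]; trivial
      simp only [Set.mem_iUnion] at this
      obtain ⟨i, hi, hx⟩ := this
      exact ⟨⟨i, hi⟩, hx⟩)
    refine ⟨∑ i : t, ((f i : ℝ) : ℂ) • (star (e i) * e i), ?_, fun r => ?_⟩
    · refine isSelfAdjoint_sum _ fun i _ => ?_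
      rw [IsSelfAdjoint, star_smul, star_mul, star_star]
      simp
    · have hE : ∑ i, star (r.ρ (e i)) * r.ρ (e i) = 1 := by
        have := congrArg r.ρ he1
        simpa only [map_sum, map_mul, map_star, map_one] using this
      have h := quad_bound (fun i => r.ρ (e i)) hE (fun i => f i - f (Quot.mk _ r)) ε hε.le (by
        intro i hi
        have hmem : Quot.mk _ r ∈ V i := by
          by_contra hn
          exact hi (he i r hn)
        have : dist (f (Quot.mk _ r)) (f i) < ε := hmem
        rw [dist_comm, Real.dist_eq] at this
        exact this.le)
      convert h using 2
      simp only [Complex.ofReal_sub, sub_smul, Finset.sum_sub_distrib, map_sum, map_smul, map_mul, map_star]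
      rw [← Finset.smul_sum, hE]
  choose a ha hr using fun n : ℕ => happ (1 / ((n : ℝ) + 1)) Nat.one_div_pos_of_nat
  have hlim : Filter.Tendsto (fun n : ℕ => 1 / ((n : ℝ) + 1)) Filter.atTop (nhds 0) :=
    tendsto_one_div_add_atTop_nhds_zero_nat
  have hcauchy : CauchySeq a := by
    rw [Metric.cauchySeq_iff']
    intro ε hε
    obtain ⟨N, hN⟩ := ((hlim.eventually (gt_mem_nhds (show (0:ℝ) < ε / 3 by positivity)))).exists_forall_of_atTop
    refine ⟨N, fun n hn => ?_⟩
    rw [dist_eq_norm]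
    refine lt_of_le_of_lt (norm_le_of_irreps _ ((ha n).sub (ha N)) (ε / 3 + ε / 3) (by positivity) fun r => ?_) (by linarith)
    have e : r.ρ (a n - a N) = (r.ρ (a n) - ((f (Quot.mk _ r) : ℝ) : ℂ) • (1 : r.H →L[ℂ] r.H)) -
      (r.ρ (a N) - ((f (Quot.mk _ r) : ℝ) : ℂ) • (1 : r.H →L[ℂ] r.H)) := by rw [map_sub]; abel
    rw [e]
    refine (norm_sub_le _ _).trans (add_le_add ((hr n r).trans (hN n hn).le) ((hr N r).trans (hN N le_rfl).le))
  obtain ⟨z, hz⟩ := cauchySeq_tendsto_of_complete hcauchy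
  have hzr : ∀ r : IrredRep A, r.ρ z = ((f (Quot.mk _ r) : ℝ) : ℂ) • (1 : r.H →L[ℂ] r.H) := by
    intro r
    have hcont : Continuous r.ρ := rho_cont r
    have h1 : Filter.Tendsto (fun n => r.ρ (a n)) Filter.atTop (nhds (r.ρ z)) :=
      (hcont.tendsto z).comp hz
    have h2 : Filter.Tendsto (fun n => r.ρ (a n)) Filter.atTop
        (nhds (((f (Quot.mk _ r) : ℝ) : ℂ) • (1 : r.H →L[ℂ] r.H))) := by
      rw [tendsto_iff_norm_sub_tendsto_zero]
      exact squeeze_zero (fun _ => norm_nonneg _) (fun n => hr n r) hlim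
    exact tendsto_nhds_unique h1 h2
  refine ⟨z, ?_, hzr⟩
  rw [Subalgebra.mem_center_iff]
  intro b
  rw [← sub_eq_zero]
  refine eq_zero_of_irreps _ fun r => ?_
  rw [map_sub, map_mul, map_mul, hzr]
  simp

end


section
open scoped InnerProductSpace
variable {A : Type} [CStarAlgebra A]

/-- The scalar by which a central element acts. -/
noncomputable def chi (r : IrredRep A) (z : Subalgebra.center ℂ A) : ℂ :=
  Classical.choose (schur r z.1 z.2)

lemma chi_spec (r : IrredRep A) (z : Subalgebra.center ℂ A) :
    r.ρ z.1 = chi r z • (1 : r.H →L[ℂ] r.H) := Classical.choose_spec (schur r z.1 z.2)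

lemma smul_one_inj (r : IrredRep A) {c d : ℂ}
    (h : c • (1 : r.H →L[ℂ] r.H) = d • (1 : r.H →L[ℂ] r.H)) : c = d :=
  smul_left_injective ℂ (one_ne_zero (α := r.H →L[ℂ] r.H)) h

lemma chi_unique (r : IrredRep A) (z : Subalgebra.center ℂ A) (c : ℂ)
    (h : r.ρ z.1 = c • (1 : r.H →L[ℂ] r.H)) : chi r z = c :=
  smul_one_inj r (by rw [← chi_spec, h])

lemma chi_norm (r : IrredRep A) (z : Subalgebra.center ℂ A) : ‖chi r z‖ ≤ ‖z‖ := by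
  have h := NonUnitalStarAlgHom.norm_apply_le r.ρ z.1
  rw [chi_spec, norm_smul, norm_one, mul_one] at h
  exact h

/-- The character of the center attached to an irreducible representation. -/
noncomputable def chiCLM (r : IrredRep A) : (Subalgebra.center ℂ A) →L[ℂ] ℂ :=
  LinearMap.mkContinuous
    { toFun := chi r
      map_add' := fun x y => chi_unique r _ _ (by
        rw [add_smul, ← chi_spec, ← chi_spec, ← map_add]; rfl)
      map_smul' := fun c x => chi_unique r _ _ (by
        rw [RingHom.id_apply, smul_eq_mul, mul_smul, ← chi_spec, ← map_smul]; rfl) }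
    1 (fun z => by rw [one_mul]; exact chi_norm r z)

/-- The restriction map on representations. -/
noncomputable def resRep (r : IrredRep A) : WeakDual.characterSpace ℂ (Subalgebra.center ℂ A) :=
  ⟨StrongDual.toWeakDual (chiCLM r), by
    rw [WeakDual.CharacterSpace.eq_set_map_one_map_mul]
    refine ⟨chi_unique r _ _ ?_, fun x y => chi_unique r _ _ ?_⟩
    · rw [one_smul]; exact map_one r.ρ
    · change _ = (chi r x * chi r y) • (1 : r.H →L[ℂ] r.H)
      have : r.ρ (x.1 * y.1) = (chi r x * chi r y) • (1 : r.H →L[ℂ] r.H) := by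
        rw [map_mul, chi_spec, chi_spec, smul_mul_smul_comm, one_mul]
      exact this⟩

lemma resRep_apply (r : IrredRep A) (z : Subalgebra.center ℂ A) : resRep r z = chi r z := rfl

lemma chi_congr (r s : IrredRep A) (h : Quot.mk UEquiv r = Quot.mk UEquiv s)
    (z : Subalgebra.center ℂ A) : chi r z = chi s z := by
  symm
  apply chi_unique
  have := (ker_of_mk_eq r s h (z.1 - chi r z • 1)).1 (by
    rw [map_sub, map_smul, map_one, ← chi_spec, sub_self])
  rwa [map_sub, map_smul, map_one, sub_eq_zero] at this

/-- The restriction map on the spectrum. -/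
noncomputable def res : Quot (UEquiv (A := A)) →
    WeakDual.characterSpace ℂ (Subalgebra.center ℂ A) :=
  Quot.lift resRep (fun r s h => WeakDual.CharacterSpace.ext fun z =>
    chi_congr r s (Quot.sound h) z)

lemma res_mk (r : IrredRep A) (z : Subalgebra.center ℂ A) :
    res (Quot.mk UEquiv r) z = chi r z := rfl

lemma inj_aux [T2Space (Quot (UEquiv (A := A)))] (r₁ r₂ : IrredRep A)
    (h : ∀ z ∈ Subalgebra.center ℂ A, ∀ c : ℂ,
          r₁.ρ z = c • (1 : r₁.H →L[ℂ] r₁.H) →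
          r₂.ρ z = c • (1 : r₂.H →L[ℂ] r₂.H)) :
    Quot.mk UEquiv r₁ = Quot.mk UEquiv r₂ := by
  by_contra hne
  obtain ⟨f, h0, h1, -⟩ := exists_continuous_zero_one_of_isClosed
    (isClosed_singleton (x := Quot.mk UEquiv r₁)) (isClosed_singleton (x := Quot.mk UEquiv r₂))
    (by simpa using hne)
  obtain ⟨z, hz, hr⟩ := dauns_hofmann f
  have e1 := h z hz _ (hr r₁)
  have e2 := smul_one_inj r₂ (e1.symm.trans (hr r₂))
  have a0 : f (Quot.mk UEquiv r₁) = 0 := h0 rfl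
  have a1 : f (Quot.mk UEquiv r₂) = 1 := h1 rfl
  rw [a0, a1] at e2
  simp at e2

lemma chi_cont (z : Subalgebra.center ℂ A) :
    Continuous fun x : Quot (UEquiv (A := A)) => res x z := by
  have hn : IsStarNormal z.1 := ⟨by
    have := (Subalgebra.mem_center_iff.1 z.2 (star z.1))
    exact this⟩
  rw [continuous_iff_continuousAt]
  intro x
  rw [ContinuousAt, Metric.tendsto_nhds]
  intro ε hε
  let c0 := res x z
  let g : ℂ → ℂ := fun w => ((max 0 (ε - dist w c0) : ℝ) : ℂ)
  have hg : Continuous g := by fun_prop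
  let w : A := cfc g z.1
  have hw : ∀ r : IrredRep A, r.ρ w = g (chi r z) • (1 : r.H →L[ℂ] r.H) := by
    intro r
    have h1 : r.ρ (cfc g z.1) = cfc g (r.ρ z.1) :=
      StarAlgHomClass.map_cfc r.ρ g z.1 (hf := hg.continuousOn) (hφ := rho_cont r) (ha := hn)
        (hφa := hn.map r.ρ)
    rw [h1, chi_spec, ← Algebra.algebraMap_eq_smul_one, cfc_algebraMap,
      Algebra.algebraMap_eq_smul_one]
  have hopen : IsOpen {y : Quot (UEquiv (A := A)) | ∃ r : IrredRep A,
        Quot.mk _ r = y ∧ ¬ Ideal.span {w} ≤ RingHom.ker r.ρ.toRingHom} :=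
    TopologicalSpace.isOpen_generateFrom_of_mem ⟨_, rfl⟩
  have hiff : ∀ r : IrredRep A, Ideal.span {w} ≤ RingHom.ker r.ρ.toRingHom ↔ r.ρ w = 0 := by
    intro r
    rw [Ideal.span_le, Set.singleton_subset_iff]
    rfl
  filter_upwards [hopen.mem_nhds (by
    obtain ⟨r, rfl⟩ := Quot.exists_rep x
    refine ⟨r, rfl, ?_⟩
    rw [hiff, hw]
    refine smul_ne_zero ?_ one_ne_zero
    change ((max 0 (ε - dist (chi r z) (chi r z)) : ℝ) : ℂ) ≠ 0
    rw [dist_self, sub_zero, max_eq_right hε.le]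
    exact_mod_cast hε.ne')] with y hy
  obtain ⟨r, rfl, hr⟩ := hy
  rw [hiff, hw] at hr
  by_contra hge
  apply hr
  have : g (chi r z) = 0 := by
    change ((max 0 (ε - dist (chi r z) c0) : ℝ) : ℂ) = 0
    rw [max_eq_left]
    · simp
    · have : ε ≤ dist (chi r z) c0 := not_lt.1 hge
      linarith
  rw [this, zero_smul]

lemma res_cont : Continuous (res (A := A)) := by
  refine Continuous.subtype_mk (f := fun x => (res x).1) ?_ _
  exact WeakDual.continuous_of_continuous_eval fun z => chi_cont z

lemma center_closed : IsClosed ((Subalgebra.center ℂ A : Subalgebra ℂ A) : Set A) := by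
  have : ((Subalgebra.center ℂ A : Subalgebra ℂ A) : Set A) = ⋂ b : A, {z | b * z = z * b} := by
    ext z
    rw [SetLike.mem_coe, Subalgebra.mem_center_iff, Set.mem_iInter]
    rfl
  rw [this]
  exact isClosed_iInter fun b => isClosed_eq (by fun_prop) (by fun_prop)

lemma res_surj : Function.Surjective (res (A := A)) := by
  intro χ
  have : CompleteSpace (Subalgebra.center ℂ A) := center_closed.completeSpace_coe
  have hA : Nontrivial A := by
    by_contra hA
    rw [not_nontrivial_iff_subsingleton] at hA
    have h1 : χ 1 = 1 := map_one χ
    rw [Subsingleton.elim (1 : Subalgebra.center ℂ A) 0, map_zero] at h1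
    exact zero_ne_one h1
  obtain ⟨φ, hφ, hφn⟩ := exists_extension_norm_eq (Subalgebra.toSubmodule (Subalgebra.center ℂ A))
    (WeakDual.CharacterSpace.toCLM χ)
  have hφ' : ∀ z : Subalgebra.center ℂ A, φ z.1 = χ z := fun z => hφ z
  have hφ1 : φ 1 = 1 := (hφ' 1).trans (map_one χ)
  have hn : ‖φ‖ ≤ 1 := by
    rw [hφn]
    have : NormOneClass (Subalgebra.center ℂ A) := ⟨norm_one (α := A)⟩
    refine ContinuousLinearMap.opNorm_le_bound _ zero_le_one fun z => ?_
    rw [one_mul]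
    exact AlgHom.norm_apply_le_self (WeakDual.CharacterSpace.toAlgHom χ) z
  let L : Ideal A := Ideal.span {a | ∃ z : Subalgebra.center ℂ A, χ z = 0 ∧ z.1 = a}
  have hL : ∀ a ∈ L, φ a = 0 := by
    let _ : PartialOrder A := CStarAlgebra.spectralOrder A
    have : StarOrderedRing A := CStarAlgebra.spectralOrderedRing A
    let f : A →ₚ[ℂ] ℂ :=
      PositiveLinearMap.mk₀ φ.toLinearMap (fun a ha => state_pos φ hφ1 hn a ha)
    have key : ∀ a ∈ L, ∀ b : A, φ (b * a) = 0 := by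
      intro a ha
      refine Submodule.span_induction (p := fun a _ => ∀ b : A, φ (b * a) = 0) ?_ ?_ ?_ ?_ ha
      · rintro _ ⟨z, hz, rfl⟩ b
        have hsz : star z.1 ∈ Subalgebra.center ℂ A := by
          rw [Subalgebra.mem_center_iff]
          intro d
          have := congrArg star (Subalgebra.mem_center_iff.1 z.2 (star d))
          rw [star_mul, star_mul, star_star] at this
          exact this.symm
        have h0 : φ (star z.1 * z.1) = 0 := by
          have := hφ' (⟨star z.1, hsz⟩ * z)
          rw [map_mul χ, hz, mul_zero] at this
          exact this
        have hnz : ‖f.toPreGNS z.1‖ = 0 := by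
          have h2 : ((‖f.toPreGNS z.1‖ : ℂ)) ^ 2 = 0 :=
            (PositiveLinearMap.preGNS_norm_sq f (f.toPreGNS z.1)).trans h0
          exact_mod_cast pow_eq_zero_iff two_ne_zero |>.1 h2
        have h3 : ⟪f.toPreGNS (star b), f.toPreGNS z.1⟫_ℂ = φ (b * z.1) := by
          rw [PositiveLinearMap.preGNS_inner_def]
          simp only [PositiveLinearMap.ofPreGNS_toPreGNS, star_star]
          rfl
        have h4 := norm_inner_le_norm (𝕜 := ℂ) (f.toPreGNS (star b)) (f.toPreGNS z.1)
        rw [hnz, mul_zero, h3] at h4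
        exact norm_le_zero_iff.1 h4
      · intro b; rw [mul_zero, map_zero]
      · intro x y _ _ hx hy b
        rw [mul_add, map_add, hx, hy, add_zero]
      · intro c x _ hx b
        rw [smul_eq_mul, ← mul_assoc, hx]
    intro a ha
    have := key a ha 1
    rwa [one_mul] at this
  obtain ⟨r, ξ, h0, hr⟩ := exists_irrep L φ hφ1 hn hL
  refine ⟨Quot.mk _ r, WeakDual.CharacterSpace.ext fun z => ?_⟩
  rw [res_mk]
  have hz : χ (z - χ z • 1) = 0 := by rw [map_sub, map_smul, map_one]; simp
  have h1 := hr (z - χ z • (1 : Subalgebra.center ℂ A) : Subalgebra.center ℂ A).1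
    (Ideal.subset_span ⟨_, hz, rfl⟩)
  have h2 : r.ρ (z - χ z • (1 : Subalgebra.center ℂ A) : Subalgebra.center ℂ A).1
      = (chi r z - χ z) • (1 : r.H →L[ℂ] r.H) := by
    change r.ρ (z.1 - χ z • (1 : A)) = _
    rw [map_sub, map_smul, map_one, chi_spec, sub_smul]
  rw [h2] at h1
  have h3 : (chi r z - χ z) • ξ = 0 := h1
  exact sub_eq_zero.1 ((smul_eq_zero.1 h3).resolve_right h0)

end

end Aux

/-- If the spectrum `Â` of a unital C*-algebra `A` (unitary equivalence classes
of irreducible representations, with the topology pulled back from the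
hull-kernel topology on `Prim(A)`) is Hausdorff, then the restriction map
`res : Â → Ẑ(A)`, sending a class `[λ]` to the character of `Z(A)` determined
by `λ|_{Z(A)}`, is injective — hence a homeomorphism of the compact space `Â`
onto `Ẑ(A)`. -/
theorem stmt_17 (A : Type) [CStarAlgebra A] :
    -- the spectrum `Â`
    let AHat := Quot (UEquiv (A := A))
    -- the topology on `Â`, pulled back from the hull-kernel topology on `Prim(A)`
    letI : TopologicalSpace AHat := TopologicalSpace.generateFrom
      {U | ∃ J : Ideal A, U = {x : AHat | ∃ r : IrredRep A,
        Quot.mk _ r = x ∧ ¬ J ≤ RingHom.ker r.ρ.toRingHom}}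
    -- assume `Â` is Hausdorff; then:
    T2Space AHat →
      -- `res` is injective: two irreducible representations restricting to the
      -- same character of the center `Z(A)` are unitarily equivalent …
      (∀ r₁ r₂ : IrredRep A,
        (∀ z ∈ Subalgebra.center ℂ A, ∀ c : ℂ,
          r₁.ρ z = c • (1 : r₁.H →L[ℂ] r₁.H) →
          r₂.ρ z = c • (1 : r₂.H →L[ℂ] r₂.H)) →
        Quot.mk UEquiv r₁ = Quot.mk UEquiv r₂) ∧
      -- … hence `res` is a homeomorphism of `Â` onto `Ẑ(A)`:
      ∃ e : AHat ≃ₜ WeakDual.characterSpace ℂ ↥(Subalgebra.center ℂ A),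
        ∀ (r : IrredRep A) (z : ↥(Subalgebra.center ℂ A)),
          r.ρ z.val = (e (Quot.mk UEquiv r) z) • (1 : r.H →L[ℂ] r.H) := by
  intro AHat hT2
  have hT2' : T2Space (Quot (UEquiv (A := A))) := hT2
  have hinj := inj_aux (A := A)
  refine ⟨hinj, ?_⟩
  have hbij : Function.Bijective (res (A := A)) := by
    refine ⟨fun x y hxy => ?_, res_surj⟩
    obtain ⟨r₁, rfl⟩ := Quot.exists_rep x
    obtain ⟨r₂, rfl⟩ := Quot.exists_rep y
    refine hinj r₁ r₂ fun z hz c hc => ?_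
    have h1 : chi r₁ ⟨z, hz⟩ = chi r₂ ⟨z, hz⟩ :=
      DFunLike.congr_fun hxy (⟨z, hz⟩ : Subalgebra.center ℂ A)
    have h2 := chi_spec r₂ ⟨z, hz⟩
    rw [← h1, chi_unique r₁ ⟨z, hz⟩ c hc] at h2
    exact h2
  have hc : Continuous (Equiv.ofBijective (res (A := A)) hbij) := res_cont
  exact ⟨hc.homeoOfEquivCompactToT2, fun r z => chi_spec r z⟩
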